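/- Fix an integer r ≥ 2. For each n let H_n be an (r+1)-graph on n vertices with maximum r-degree at most d_n and independence number at most α_n ≥ r, and let p_n ∈ [0,1] and b_n > 0 satisfy: p_n·n → ∞; (p_n·d_n²·α_n^{2r}) / ((n·b_n² + d_n·b_n·α_n^r)·α_n·log n) → ∞; and d_n³·n^{3r−3}·p_n^{3r}/(p_n·n) → 0, as n → ∞. Then for every ε > 0 there exists n₀ such that for all n ≥ n₀ there is a set Y of vertices of H_n with: (i) |Y| ≥ (1−ε)·p_n·n; (ii) the induced subgraph H_n[Y] is linear and triangle-free; and (iii) every independent set Z of H_n[Y] satisfies h(Z, b_n) ≤ (1+ε)·p_n·d_n·C(α_n, r), where h is computed in H_n[Y]. -/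

import Mathlib

open Finset
open scoped Classical

/-- `Z` is an independent set of the hypergraph `H`: it contains no edge. -/
def IsIndep {V : Type*} [DecidableEq V] (H : Finset (Finset V)) (Z : Finset V) : Prop :=
  ∀ e ∈ H, ¬ e ⊆ Z

/-- The independence number of a hypergraph on a finite vertex type. -/
noncomputable def indepNum {V : Type*} [Fintype V] [DecidableEq V]
    (H : Finset (Finset V)) : ℕ :=
  ((Finset.univ : Finset V).powerset.filter (fun Z => IsIndep H Z)).sup Finset.card

/-- `H` has maximum `r`-degree at most `d`: every `r`-element vertex set is
contained in at most `d` edges. -/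
def maxDegLe {V : Type*} [DecidableEq V] (r : ℕ) (H : Finset (Finset V)) (d : ℕ) : Prop :=
  ∀ S : Finset V, S.card = r → (H.filter (fun e => S ⊆ e)).card ≤ d

/-- `H` is linear: no two distinct edges share two or more vertices. -/
def Linear {V : Type*} [DecidableEq V] (H : Finset (Finset V)) : Prop :=
  ∀ e ∈ H, ∀ f ∈ H, e ≠ f → (e ∩ f).card ≤ 1

/-- `H` is triangle-free: there are no three distinct edges `e, f, g` with
`|e∩f| = |f∩g| = |g∩e| = 1` and `e∩f∩g = ∅`. -/
def TriangleFree {V : Type*} [DecidableEq V] (H : Finset (Finset V)) : Prop :=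
  ¬ ∃ e ∈ H, ∃ f ∈ H, ∃ g ∈ H, e ≠ f ∧ f ≠ g ∧ e ≠ g ∧
      (e ∩ f).card = 1 ∧ (f ∩ g).card = 1 ∧ (g ∩ e).card = 1 ∧ e ∩ f ∩ g = ∅

noncomputable def EE {n : ℕ} (p : ℝ) (G : Finset (Fin n) → ℝ) : ℝ :=
  ∑ X ∈ (univ : Finset (Fin n)).powerset,
    ((∏ _v ∈ X, p) * (∏ _v ∈ univ \ X, (1 - p))) * G X

lemma EE_exp {n : ℕ} (p : ℝ) (c : Fin n → ℝ) :
    EE p (fun X => Real.exp (∑ v ∈ X, c v)) = ∏ v, (1 - p + p * Real.exp (c v)) := by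
  have h := Finset.prod_add (fun v => p * Real.exp (c v)) (fun _ => 1 - p) (univ : Finset (Fin n))
  simp_rw [add_comm (1 - p)]
  rw [h]
  unfold EE
  refine Finset.sum_congr rfl fun X _ => ?_
  simp only [Real.exp_sum, Finset.prod_mul_distrib]
  ring

lemma EE_sub {n : ℕ} (p : ℝ) (S : Finset (Fin n)) :
    EE p (fun X => if S ⊆ X then (1 : ℝ) else 0) = p ^ S.card := by
  have h := Finset.prod_add (fun _ => p) (fun v => if v ∈ S then 0 else 1 - p)
    (univ : Finset (Fin n))
  have h2 : ∏ v : Fin n, (p + if v ∈ S then 0 else 1 - p) = p ^ S.card := by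
    have : ∀ v : Fin n, (p + if v ∈ S then 0 else 1 - p) = if v ∈ S then p else 1 := by
      intro v; split_ifs <;> ring
    simp_rw [this]
    simp [Finset.prod_ite_mem]
  rw [← h2, h]
  unfold EE
  refine Finset.sum_congr rfl fun X _ => ?_
  by_cases hS : S ⊆ X
  · have : ∏ v ∈ univ \ X, (if v ∈ S then 0 else 1 - p) = ∏ v ∈ univ \ X, (1 - p) := by
      refine Finset.prod_congr rfl fun v hv => ?_
      rw [if_neg]
      intro hvS
      exact (Finset.mem_sdiff.1 hv).2 (hS hvS)
    rw [this]; simp [hS]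
  · obtain ⟨v, hv, hvX⟩ := Finset.not_subset.1 hS
    have : ∏ v ∈ univ \ X, (if v ∈ S then 0 else 1 - p) = 0 :=
      Finset.prod_eq_zero (i := v) (by simp [hvX]) (by simp [hv])
    rw [this]; simp [hS]

lemma EE_add {n : ℕ} (p : ℝ) (F G : Finset (Fin n) → ℝ) :
    EE p (fun X => F X + G X) = EE p F + EE p G := by
  unfold EE
  rw [← Finset.sum_add_distrib]
  exact Finset.sum_congr rfl fun X _ => by ring

lemma EE_mul {n : ℕ} (p c : ℝ) (F : Finset (Fin n) → ℝ) :
    EE p (fun X => c * F X) = c * EE p F := by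
  unfold EE
  rw [Finset.mul_sum]
  exact Finset.sum_congr rfl fun X _ => by ring

lemma EE_sum {n : ℕ} {ι : Type*} (p : ℝ) (s : Finset ι) (F : ι → Finset (Fin n) → ℝ) :
    EE p (fun X => ∑ i ∈ s, F i X) = ∑ i ∈ s, EE p (F i) := by
  unfold EE
  rw [Finset.sum_comm]
  exact Finset.sum_congr rfl fun X _ => by rw [Finset.mul_sum]

lemma EE_one {n : ℕ} (p : ℝ) : EE (n := n) p (fun _ => 1) = 1 := by
  have := EE_sub (n := n) p ∅
  simpa using this

lemma EE_exists {n : ℕ} (p : ℝ) (hp0 : 0 ≤ p) (hp1 : p ≤ 1) (G : Finset (Fin n) → ℝ)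
    (h : EE p G < 1) : ∃ X, G X < 1 := by
  by_contra hc
  push Not at hc
  have : EE (n := n) p (fun _ => 1) ≤ EE p G := by
    unfold EE
    refine Finset.sum_le_sum fun X _ => ?_
    refine mul_le_mul_of_nonneg_left (hc X) ?_
    refine mul_nonneg (Finset.prod_nonneg fun _ _ => hp0)
      (Finset.prod_nonneg fun _ _ => by linarith)
  rw [EE_one] at this
  linarith

/-- mgf bound -/
lemma EE_mgf {n : ℕ} (p : ℝ) (hp0 : 0 ≤ p) (hp1 : p ≤ 1) (c : Fin n → ℝ)
    (hc0 : ∀ v, 0 ≤ c v) (hc1 : ∀ v, c v ≤ 1) (l : ℝ) (hl : |l| ≤ 1) :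
    EE p (fun X => Real.exp (∑ v ∈ X, l * c v)) ≤ Real.exp ((l + l ^ 2) * (p * ∑ v, c v)) := by
  rw [EE_exp, Finset.mul_sum, Finset.mul_sum, Real.exp_sum]
  refine Finset.prod_le_prod (fun v _ => ?_) (fun v _ => ?_)
  · have := Real.exp_pos (l * c v)
    have := mul_nonneg hp0 this.le
    linarith
  · have hconv : Real.exp (l * c v) ≤ 1 + c v * (Real.exp l - 1) := by
      have := convexOn_exp.2 (Set.mem_univ 0) (Set.mem_univ l)
        (show (0:ℝ) ≤ 1 - c v by linarith [hc1 v]) (hc0 v) (by ring)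
      simp only [smul_eq_mul, mul_zero, zero_add, Real.exp_zero, mul_one] at this
      rw [mul_comm l]
      linarith
    have he : Real.exp l - 1 ≤ l + l ^ 2 := by
      have := (abs_le.1 (Real.abs_exp_sub_one_sub_id_le hl)).2
      linarith
    have h1 : Real.exp (l * c v) ≤ 1 + c v * (l + l ^ 2) := by
      have := mul_le_mul_of_nonneg_left he (hc0 v)
      linarith
    have h2 := mul_le_mul_of_nonneg_left h1 hp0
    have h3 := Real.add_one_le_exp ((l + l ^ 2) * (p * c v))
    nlinarith

lemma edges_sup {n : ℕ} (r d s : ℕ) (H : Finset (Finset (Fin n)))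
    (hH : ∀ e ∈ H, e.card = r + 1) (hdeg : maxDegLe r H d) (T : Finset (Fin n))
    (hT : T.card = s) (hs : s ≤ r) :
    (H.filter (fun g => T ⊆ g)).card ≤ n ^ (r - s) * d := by
  have hsub : H.filter (fun g => T ⊆ g) ⊆
      (((univ : Finset (Fin n)).powersetCard (r - s)).filter (fun R => (T ∪ R).card = r)).biUnion
        (fun R => H.filter (fun g => T ∪ R ⊆ g)) := by
    intro g hg
    obtain ⟨hgH, hTg⟩ := Finset.mem_filter.1 hg
    have hc : (g \ T).card = r + 1 - s := by
      rw [Finset.card_sdiff_of_subset hTg, hH g hgH, hT]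
    obtain ⟨R, hR, hRc⟩ := Finset.exists_subset_card_eq (s := g \ T) (n := r - s) (by omega)
    rw [Finset.mem_biUnion]
    refine ⟨R, ?_, ?_⟩
    · rw [Finset.mem_filter, Finset.mem_powersetCard]
      refine ⟨⟨Finset.subset_univ _, hRc⟩, ?_⟩
      rw [Finset.card_union_of_disjoint]
      · omega
      · exact (Finset.disjoint_of_subset_left hR Finset.sdiff_disjoint).symm
    · rw [Finset.mem_filter]
      exact ⟨hgH, Finset.union_subset hTg (hR.trans Finset.sdiff_subset)⟩
  refine (Finset.card_le_card hsub).trans ?_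
  refine (Finset.card_biUnion_le_card_mul _ _ d ?_).trans ?_
  · intro R hR
    exact hdeg _ (Finset.mem_filter.1 hR).2
  · refine Nat.mul_le_mul_right d ?_
    refine (Finset.card_filter_le _ _).trans ?_
    rw [Finset.card_powersetCard, Finset.card_univ, Fintype.card_fin]
    exact Nat.choose_le_pow _ _

lemma count {n : ℕ} (r d s : ℕ) (H : Finset (Finset (Fin n)))
    (hH : ∀ e ∈ H, e.card = r + 1) (hdeg : maxDegLe r H d) (A : Finset (Fin n))
    (p : ℝ) (hp0 : 0 ≤ p) (hpn : 1 ≤ p * n) :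
    ∑ g ∈ H.filter (fun g => s ≤ (g ∩ A).card ∧ (g ∩ A).card ≤ r), p ^ (g \ A).card
      ≤ 2 ^ A.card * (d * p * (p * n) ^ (r - s)) := by
  rw [← Finset.sum_fiberwise_of_maps_to (t := A.powerset) (g := fun g => g ∩ A)
    (by intro g _; simp [Finset.inter_subset_right])]
  have : (2 : ℝ) ^ A.card * (d * p * (p * n) ^ (r - s)) =
      ∑ T ∈ A.powerset, (d * p * (p * n) ^ (r - s)) := by
    rw [Finset.sum_const, Finset.card_powerset]; simp
  rw [this]
  refine Finset.sum_le_sum fun T _ => ?_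
  have hnn : 0 ≤ (d : ℝ) * p * (p * n) ^ (r - s) := by positivity
  by_cases hT : s ≤ T.card ∧ T.card ≤ r
  · have h1 : ∀ g ∈ (H.filter (fun g => s ≤ (g ∩ A).card ∧ (g ∩ A).card ≤ r)).filter
        (fun g => g ∩ A = T), p ^ (g \ A).card = p ^ (r + 1 - T.card) := by
      intro g hg
      simp only [Finset.mem_filter] at hg
      have := Finset.card_sdiff_add_card_inter g A
      rw [hg.2, hH g hg.1.1] at this
      congr 1; omega
    rw [Finset.sum_congr rfl h1, Finset.sum_const, nsmul_eq_mul]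
    have h2 : (((H.filter (fun g => s ≤ (g ∩ A).card ∧ (g ∩ A).card ≤ r)).filter
        (fun g => g ∩ A = T)).card : ℝ) ≤ (n : ℝ) ^ (r - T.card) * d := by
      have := edges_sup r d T.card H hH hdeg T rfl hT.2
      have h3 : ((H.filter (fun g => s ≤ (g ∩ A).card ∧ (g ∩ A).card ≤ r)).filter
        (fun g => g ∩ A = T)) ⊆ H.filter (fun g => T ⊆ g) := by
        intro g hg
        simp only [Finset.mem_filter] at hg ⊢
        exact ⟨hg.1.1, hg.2 ▸ Finset.inter_subset_left⟩
      exact_mod_cast (Finset.card_le_card h3).trans this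
    have h4 : r + 1 - T.card = (r - T.card) + 1 := by omega
    calc _ ≤ (n : ℝ) ^ (r - T.card) * d * p ^ (r + 1 - T.card) := by gcongr
      _ = d * p * (p * n) ^ (r - T.card) := by rw [h4, mul_pow]; ring
      _ ≤ _ := by
        gcongr
        exact hT.1
  · rw [Finset.sum_eq_zero]
    · exact hnn
    · intro g hg
      simp only [Finset.mem_filter] at hg
      exact absurd (hg.2 ▸ hg.1.2) hT

noncomputable def badP {n : ℕ} (H : Finset (Finset (Fin n))) :
    Finset (Finset (Fin n) × Finset (Fin n)) :=
  (H ×ˢ H).filter (fun x => x.1 ≠ x.2 ∧ 2 ≤ (x.2 ∩ x.1).card)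

noncomputable def badT {n : ℕ} (H : Finset (Finset (Fin n))) :
    Finset (Finset (Fin n) × Finset (Fin n) × Finset (Fin n)) :=
  (H ×ˢ H ×ˢ H).filter (fun x => (x.2.1 ∩ x.1).card = 1 ∧ (x.2.2 ∩ (x.1 ∪ x.2.1)).card = 2)

lemma edge_sum {n : ℕ} (r d : ℕ) (H : Finset (Finset (Fin n)))
    (hH : ∀ e ∈ H, e.card = r + 1) (hdeg : maxDegLe r H d)
    (p : ℝ) (hp0 : 0 ≤ p) (hpn : 1 ≤ p * n) :
    ∑ g ∈ H, p ^ g.card ≤ d * p * (p * n) ^ r := by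
  have := count r d 0 H hH hdeg ∅ p hp0 hpn
  simpa using this

lemma union_pow {n : ℕ} (p : ℝ) (e f : Finset (Fin n)) :
    p ^ (e ∪ f).card = p ^ e.card * p ^ (f \ e).card := by
  rw [← pow_add]
  congr 1
  have : e ∪ f = e ∪ (f \ e) := by simp
  rw [this, Finset.card_union_of_disjoint Finset.disjoint_sdiff]

lemma badP_sum {n : ℕ} (r d : ℕ) (hr : 2 ≤ r) (H : Finset (Finset (Fin n)))
    (hH : ∀ e ∈ H, e.card = r + 1) (hdeg : maxDegLe r H d)
    (p : ℝ) (hp0 : 0 ≤ p) (hpn : 1 ≤ p * n) :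
    ∑ x ∈ badP H, p ^ (x.1 ∪ x.2).card ≤ 2 ^ (r + 1) * (d * p * (p * n) ^ (r - 1)) ^ 2 := by
  unfold badP
  rw [Finset.sum_filter, Finset.sum_product]
  have h1 : ∀ e ∈ H, ∑ f ∈ H, (if e ≠ f ∧ 2 ≤ (f ∩ e).card then p ^ (e ∪ f).card else 0) ≤
      p ^ e.card * (2 ^ (r + 1) * (d * p * (p * n) ^ (r - 2))) := by
    intro e he
    have hc := count r d 2 H hH hdeg e p hp0 hpn
    rw [hH e he] at hc
    have := mul_le_mul_of_nonneg_left hc (pow_nonneg hp0 e.card)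
    refine le_trans ?_ this
    rw [Finset.sum_filter, Finset.mul_sum]
    refine Finset.sum_le_sum fun f hf => ?_
    by_cases hef : e ≠ f ∧ 2 ≤ (f ∩ e).card
    · have : (f ∩ e).card ≤ r := by
        by_contra hcon
        push Not at hcon
        have h1 : f ∩ e = f := Finset.eq_of_subset_of_card_le Finset.inter_subset_left
          (by rw [hH f hf]; omega)
        have h2 : f ∩ e = e := Finset.eq_of_subset_of_card_le Finset.inter_subset_right
          (by rw [hH e he]; omega)
        exact hef.1 (h2.symm.trans h1)
      rw [if_pos hef, if_pos ⟨hef.2, this⟩, union_pow]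
    · rw [if_neg hef]
      split_ifs <;> positivity
  refine (Finset.sum_le_sum h1).trans ?_
  rw [← Finset.sum_mul]
  refine (mul_le_mul_of_nonneg_right (edge_sum r d H hH hdeg p hp0 hpn) (by positivity)).trans ?_
  obtain ⟨k, rfl⟩ : ∃ k, r = k + 2 := ⟨r - 2, by omega⟩
  apply le_of_eq
  simp only [show k + 2 - 2 = k by omega, show k + 2 - 1 = k + 1 by omega]
  ring

lemma badT_sum {n : ℕ} (r d : ℕ) (hr : 2 ≤ r) (H : Finset (Finset (Fin n)))
    (hH : ∀ e ∈ H, e.card = r + 1) (hdeg : maxDegLe r H d)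
    (p : ℝ) (hp0 : 0 ≤ p) (hpn : 1 ≤ p * n) :
    ∑ x ∈ badT H, p ^ (x.1 ∪ x.2.1 ∪ x.2.2).card ≤
      2 ^ (3 * (r + 1)) * (d * p * (p * n) ^ (r - 1)) ^ 3 := by
  unfold badT
  rw [Finset.sum_filter, Finset.sum_product]
  have h1 : ∀ e ∈ H, ∑ x ∈ H ×ˢ H, (if (x.1 ∩ e).card = 1 ∧ (x.2 ∩ (e ∪ x.1)).card = 2
      then p ^ (e ∪ x.1 ∪ x.2).card else 0) ≤
      p ^ e.card * ((2 ^ (r + 1) * (d * p * (p * n) ^ (r - 1))) *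
        (2 ^ (2 * (r + 1)) * (d * p * (p * n) ^ (r - 2)))) := by
    intro e he
    rw [Finset.sum_product]
    have hc := count r d 1 H hH hdeg e p hp0 hpn
    rw [hH e he] at hc
    have hc2 := mul_le_mul_of_nonneg_right hc
      (show 0 ≤ 2 ^ (2 * (r + 1)) * (d * p * (p * n) ^ (r - 2)) by positivity)
    have := mul_le_mul_of_nonneg_left hc2 (pow_nonneg hp0 e.card)
    refine le_trans ?_ this
    rw [Finset.sum_filter, Finset.sum_mul, Finset.mul_sum]
    refine Finset.sum_le_sum fun f hf => ?_
    by_cases hef : (f ∩ e).card = 1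
    · rw [if_pos (by omega)]
      have hcg := count r d 2 H hH hdeg (e ∪ f) p hp0 hpn
      have hcard : (e ∪ f).card ≤ 2 * (r + 1) := by
        have := Finset.card_union_le e f
        rw [hH e he, hH f hf] at this; omega
      have hcg2 : _ ≤ (2 : ℝ) ^ (2 * (r + 1)) * (d * p * (p * n) ^ (r - 2)) := hcg.trans (by
        gcongr
        norm_num)
      rw [← mul_assoc, ← union_pow]
      refine le_trans ?_ (mul_le_mul_of_nonneg_left hcg2 (by positivity))
      rw [Finset.sum_filter, Finset.mul_sum]
      refine Finset.sum_le_sum fun g hg => ?_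
      by_cases hg2 : (g ∩ (e ∪ f)).card = 2
      · rw [if_pos ⟨hef, hg2⟩, if_pos (by omega), union_pow p (e ∪ f) g]
      · rw [if_neg (by tauto)]
        split_ifs <;> positivity
    · rw [Finset.sum_eq_zero (fun g _ => by simp [hef])]
      split_ifs <;> positivity
  refine (Finset.sum_le_sum h1).trans ?_
  rw [← Finset.sum_mul]
  refine (mul_le_mul_of_nonneg_right (edge_sum r d H hH hdeg p hp0 hpn) (by positivity)).trans ?_
  obtain ⟨k, rfl⟩ : ∃ k, r = k + 2 := ⟨r - 2, by omega⟩
  apply le_of_eq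
  simp only [show k + 2 - 2 = k by omega, show k + 2 - 1 = k + 1 by omega]
  ring

/-- clean-up: remove one vertex from each bad configuration. -/
lemma clean {n : ℕ} (r : ℕ) (H : Finset (Finset (Fin n))) (hH : ∀ e ∈ H, e.card = r + 1)
    (X : Finset (Fin n)) :
    ∃ Y ⊆ X, X.card ≤ Y.card + (((badP H).filter (fun x => x.1 ∪ x.2 ⊆ X)).card +
        ((badT H).filter (fun x => x.1 ∪ x.2.1 ∪ x.2.2 ⊆ X)).card) ∧
      Linear (H.filter (fun e => e ⊆ Y)) ∧ TriangleFree (H.filter (fun e => e ⊆ Y)) := by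
  rcases n.eq_zero_or_pos with rfl | hn
  · refine ⟨X, subset_rfl, by omega, ?_, ?_⟩
    · intro e he
      have h1 := hH e (Finset.mem_filter.1 he).1
      rw [Subsingleton.elim e ∅] at h1; simp at h1
    · rintro ⟨e, he, -⟩
      have h1 := hH e (Finset.mem_filter.1 he).1
      rw [Subsingleton.elim e ∅] at h1; simp at h1
  have hpick : ∀ e : Finset (Fin n), ∃ v : Fin n, e.Nonempty → v ∈ e := by
    intro e
    by_cases he : e.Nonempty
    · obtain ⟨v, hv⟩ := he
      exact ⟨v, fun _ => hv⟩
    · exact ⟨⟨0, hn⟩, fun h => absurd h he⟩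
  choose φ hφ using hpick
  have hφH : ∀ e ∈ H, φ e ∈ e := fun e he => hφ e (by
    rw [← Finset.card_pos, hH e he]; omega)
  set P := (badP H).filter (fun x => x.1 ∪ x.2 ⊆ X) with hP
  set T := (badT H).filter (fun x => x.1 ∪ x.2.1 ∪ x.2.2 ⊆ X) with hT
  set B := P.image (fun x => φ x.1) ∪ T.image (fun x => φ x.1) with hB
  refine ⟨X \ B, Finset.sdiff_subset, ?_, ?_, ?_⟩
  · have h1 : X.card ≤ (X \ B).card + B.card := Finset.card_le_card_sdiff_add_card
    have h2 : B.card ≤ P.card + T.card :=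
      (Finset.card_union_le _ _).trans (add_le_add Finset.card_image_le Finset.card_image_le)
    omega
  · intro e he f hf hef
    obtain ⟨heH, heY⟩ := Finset.mem_filter.1 he
    obtain ⟨hfH, hfY⟩ := Finset.mem_filter.1 hf
    by_contra hcon
    push Not at hcon
    have hmem : (e, f) ∈ P := by
      rw [hP, Finset.mem_filter, badP, Finset.mem_filter, Finset.mem_product]
      refine ⟨⟨⟨heH, hfH⟩, hef, ?_⟩, Finset.union_subset (heY.trans Finset.sdiff_subset)
        (hfY.trans Finset.sdiff_subset)⟩
      rw [Finset.inter_comm]; exact hcon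
    have h1 : φ e ∈ B := Finset.mem_union_left _ (Finset.mem_image_of_mem (fun x => φ x.1) hmem)
    exact (Finset.mem_sdiff.1 (heY (hφH e heH))).2 h1
  · rintro ⟨e, he, f, hf, g, hg, -, -, -, h1, h2, h3, h4⟩
    obtain ⟨heH, heY⟩ := Finset.mem_filter.1 he
    obtain ⟨hfH, hfY⟩ := Finset.mem_filter.1 hf
    obtain ⟨hgH, hgY⟩ := Finset.mem_filter.1 hg
    have hmem : (e, f, g) ∈ T := by
      rw [hT, Finset.mem_filter, badT, Finset.mem_filter, Finset.mem_product, Finset.mem_product]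
      refine ⟨⟨⟨heH, hfH, hgH⟩, ?_, ?_⟩, Finset.union_subset (Finset.union_subset
        (heY.trans Finset.sdiff_subset) (hfY.trans Finset.sdiff_subset))
        (hgY.trans Finset.sdiff_subset)⟩
      · rw [Finset.inter_comm]; exact h1
      · rw [Finset.inter_union_distrib_left, Finset.card_union_of_disjoint, h3, Finset.inter_comm,
          h2]
        rw [Finset.disjoint_left]
        intro v hv hv2
        have : v ∈ e ∩ f ∩ g := by
          simp only [Finset.mem_inter] at hv hv2 ⊢
          tauto
        rw [h4] at this
        simp at this
    have h1 : φ e ∈ B := Finset.mem_union_right _ (Finset.mem_image_of_mem (fun x => φ x.1) hmem)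
    exact (Finset.mem_sdiff.1 (heY (hφH e heH))).2 h1

lemma mean_bound {n : ℕ} (r d a : ℕ) (H : Finset (Finset (Fin n)))
    (hdeg : maxDegLe r H d) (Z : Finset (Fin n)) (hZ : Z.card ≤ a) :
    ∑ v ∈ univ \ Z, (((Z.powersetCard r).filter (fun e => insert v e ∈ H)).card : ℝ)
      ≤ d * (Nat.choose a r : ℝ) := by
  have h : ∑ v ∈ univ \ Z, ((Z.powersetCard r).filter (fun e => insert v e ∈ H)).card
      ≤ Nat.choose a r * d := by
    simp_rw [Finset.card_filter]
    rw [Finset.sum_comm]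
    have : ∀ e ∈ Z.powersetCard r, ∑ v ∈ univ \ Z, (if insert v e ∈ H then 1 else 0) ≤ d := by
      intro e he
      obtain ⟨heZ, hec⟩ := Finset.mem_powersetCard.1 he
      rw [← Finset.card_filter]
      refine le_trans ?_ (hdeg e hec)
      refine Finset.card_le_card_of_injOn (fun v => insert v e) ?_ ?_
      · intro v hv
        simp only [Finset.coe_filter, Set.mem_ofPred_eq] at hv ⊢
        exact ⟨hv.2, Finset.subset_insert _ _⟩
      · intro v hv w hw hvw
        simp only [Finset.coe_filter, Set.mem_ofPred_eq, Finset.mem_sdiff] at hv hw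
        have hv1 : v ∉ e := fun h => hv.1.2 (heZ h)
        have : v ∈ insert w e := by
          have h0 : v ∈ insert v e := Finset.mem_insert_self _ _
          simp only at hvw
          rwa [hvw] at h0
        exact (Finset.mem_insert.1 this).resolve_right hv1
    refine (Finset.sum_le_sum this).trans ?_
    rw [Finset.sum_const, Finset.card_powersetCard, smul_eq_mul]
    exact Nat.mul_le_mul_right d (Nat.choose_le_choose r hZ)
  have h' : ((∑ v ∈ univ \ Z, ((Z.powersetCard r).filter (fun e => insert v e ∈ H)).card : ℕ) : ℝ)
      ≤ ((Nat.choose a r * d : ℕ) : ℝ) := by exact_mod_cast h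
  push_cast at h'
  linarith

lemma num_small {n : ℕ} (a : ℕ) :
    (((univ : Finset (Fin n)).powerset.filter (fun Z => Z.card ≤ a)).card : ℝ)
      ≤ ((n : ℝ) + 1) ^ a := by
  have h : ((univ : Finset (Fin n)).powerset.filter (fun Z => Z.card ≤ a)) ⊆
      (Finset.range (a + 1)).biUnion (fun k => (univ : Finset (Fin n)).powersetCard k) := by
    intro Z hZ
    simp only [Finset.mem_filter] at hZ
    simp only [Finset.mem_biUnion, Finset.mem_range, Finset.mem_powersetCard]
    exact ⟨Z.card, by omega, Finset.subset_univ _, rfl⟩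
  have h2 : ((univ : Finset (Fin n)).powerset.filter (fun Z => Z.card ≤ a)).card ≤ (n + 1) ^ a := by
    refine (Finset.card_le_card h).trans (Finset.card_biUnion_le.trans ?_)
    rw [add_pow]
    refine Finset.sum_le_sum fun k hk => ?_
    rw [Finset.card_powersetCard, Finset.card_univ, Fintype.card_fin, one_pow, mul_one]
    have h3 : 1 ≤ a.choose k := Nat.choose_pos (by simpa [Nat.lt_succ_iff] using hk)
    exact (Nat.choose_le_pow _ _).trans (Nat.le_mul_of_pos_right _ h3)
  exact_mod_cast h2

lemma core {n : ℕ} (r d a : ℕ) (hr : 2 ≤ r) (H : Finset (Finset (Fin n)))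
    (hH : ∀ e ∈ H, e.card = r + 1) (hdeg : maxDegLe r H d) (hα : indepNum H ≤ a)
    (p b ε : ℝ) (hp0 : 0 ≤ p) (hp1 : p ≤ 1) (hb : 0 < b) (hε : 0 < ε) (hε1 : ε ≤ 1)
    (hpn : 1 ≤ p * n)
    (hA : Real.exp (-((ε / 2) ^ 2 / 4 * (p * n))) < 1 / 4)
    (hB : 2 ^ (r + 1) * (d * p * (p * n) ^ (r - 1)) ^ 2 +
      2 ^ (3 * (r + 1)) * (d * p * (p * n) ^ (r - 1)) ^ 3 ≤ 1 / 4 * (ε / 2 * (p * n)))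
    (hC : ((n : ℝ) + 1) ^ a * Real.exp (-(ε ^ 2 / 4 * (p * d * Nat.choose a r / b))) < 1 / 4) :
    ∃ Y : Finset (Fin n),
        (1 - ε) * (p * n) ≤ (Y.card : ℝ) ∧
        Linear (H.filter (fun e => e ⊆ Y)) ∧
        TriangleFree (H.filter (fun e => e ⊆ Y)) ∧
        ∀ Z ⊆ Y, IsIndep (H.filter (fun e => e ⊆ Y)) Z →
          (∑ v ∈ Y \ Z,
              min b (((Z.powersetCard r).filter
                (fun e => insert v e ∈ H.filter (fun e' => e' ⊆ Y))).card : ℝ))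
            ≤ (1 + ε) * p * (d : ℝ) * (Nat.choose a r : ℝ) := by
  set μ : ℝ := p * d * Nat.choose a r / b with hμ
  have hμ0 : 0 ≤ μ := by positivity
  let c : Finset (Fin n) → Fin n → ℝ := fun Z v => if v ∈ Z then 0 else
    min b (((Z.powersetCard r).filter (fun e => insert v e ∈ H)).card : ℝ) / b
  have hc0 : ∀ Z v, 0 ≤ c Z v := by
    intro Z v
    simp only [c]
    split_ifs
    · rfl
    · positivity
  have hc1 : ∀ Z v, c Z v ≤ 1 := by
    intro Z v
    simp only [c]
    split_ifs
    · norm_num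
    · rw [div_le_one hb]; exact min_le_left _ _
  let 𝒵 := (univ : Finset (Fin n)).powerset.filter (fun Z => Z.card ≤ a)
  have hcs : ∀ Z ∈ 𝒵, p * ∑ v, c Z v ≤ μ := by
    intro Z hZ
    have hm := mean_bound r d a H hdeg Z (Finset.mem_filter.1 hZ).2
    have h1 : ∑ v, c Z v ≤ (d * (Nat.choose a r : ℝ)) / b := by
      refine le_trans ?_ (div_le_div_of_nonneg_right hm hb.le)
      rw [Finset.sum_div, ← Finset.sum_sdiff (Finset.subset_univ Z)]
      have : ∑ v ∈ Z, c Z v = 0 := Finset.sum_eq_zero fun v hv => by simp [c, hv]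
      rw [this, add_zero]
      refine Finset.sum_le_sum fun v hv => ?_
      have hv' : v ∉ Z := (Finset.mem_sdiff.1 hv).2
      simp only [c, if_neg hv']
      exact div_le_div_of_nonneg_right (min_le_right _ _) hb.le
    calc p * ∑ v, c Z v ≤ p * ((d * (Nat.choose a r : ℝ)) / b) := by gcongr
      _ = μ := by rw [hμ]; ring
  -- the potential
  let G1 : Finset (Fin n) → ℝ := fun X =>
    Real.exp (ε / 4 * ((1 - ε / 2) * (p * n))) * Real.exp (∑ v ∈ X, (-(ε / 4)) * 1)
  let G2 : Finset (Fin n) → ℝ := fun X => (ε / 2 * (p * n))⁻¹ *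
    ((∑ x ∈ badP H, if x.1 ∪ x.2 ⊆ X then (1 : ℝ) else 0) +
      ∑ x ∈ badT H, if x.1 ∪ x.2.1 ∪ x.2.2 ⊆ X then (1 : ℝ) else 0)
  let G3 : Finset (Fin n) → ℝ := fun X => ∑ Z ∈ 𝒵, Real.exp (-(ε / 2 * ((1 + ε) * μ))) *
    Real.exp (∑ v ∈ X, ε / 2 * c Z v)
  have hpos : 0 < ε / 2 * (p * n) := by positivity
  have hE1 : EE p G1 < 1 / 4 := by
    refine lt_of_le_of_lt ?_ hA
    simp only [G1]
    rw [EE_mul]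
    have := EE_mgf (n := n) p hp0 hp1 (fun _ => 1) (fun _ => by norm_num) (fun _ => by norm_num)
      (-(ε / 4)) (by rw [abs_neg, abs_of_pos (by positivity)]; linarith)
    refine (mul_le_mul_of_nonneg_left this (Real.exp_pos _).le).trans ?_
    rw [← Real.exp_add]
    apply Real.exp_le_exp.2
    simp only [Finset.sum_const, Finset.card_univ, Fintype.card_fin, nsmul_eq_mul, mul_one]
    apply le_of_eq
    ring
  have hE2 : EE p G2 ≤ 1 / 4 := by
    simp only [G2]
    rw [EE_mul, EE_add, EE_sum, EE_sum]
    simp_rw [EE_sub]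
    rw [inv_mul_le_iff₀ hpos]
    have h1 := badP_sum r d hr H hH hdeg p hp0 hpn
    have h2 := badT_sum r d hr H hH hdeg p hp0 hpn
    linarith
  have hE3 : EE p G3 < 1 / 4 := by
    refine lt_of_le_of_lt ?_ hC
    simp only [G3]
    rw [EE_sum]
    have : ∀ Z ∈ 𝒵, EE p (fun X => Real.exp (-(ε / 2 * ((1 + ε) * μ))) *
        Real.exp (∑ v ∈ X, ε / 2 * c Z v)) ≤ Real.exp (-(ε ^ 2 / 4 * μ)) := by
      intro Z hZ
      rw [EE_mul]
      have := EE_mgf (n := n) p hp0 hp1 (c Z) (hc0 Z) (hc1 Z)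
        (ε / 2) (by rw [abs_of_pos (by positivity)]; linarith)
      refine (mul_le_mul_of_nonneg_left this (Real.exp_pos _).le).trans ?_
      rw [← Real.exp_add]
      apply Real.exp_le_exp.2
      have h1 := mul_le_mul_of_nonneg_left (hcs Z hZ)
        (show 0 ≤ ε / 2 + (ε / 2) ^ 2 by positivity)
      nlinarith
    refine (Finset.sum_le_sum this).trans ?_
    rw [Finset.sum_const, nsmul_eq_mul]
    exact mul_le_mul_of_nonneg_right (num_small a) (Real.exp_pos _).le
  obtain ⟨X, hX⟩ := EE_exists p hp0 hp1 (fun X => G1 X + (G2 X + G3 X)) (by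
    rw [EE_add, EE_add]; linarith)
  have hG1 : 0 ≤ G1 X := by positivity
  have hG2 : 0 ≤ G2 X := by
    refine mul_nonneg (by positivity) (add_nonneg ?_ ?_) <;>
    exact Finset.sum_nonneg fun x _ => by split_ifs <;> norm_num
  have hG3 : 0 ≤ G3 X := Finset.sum_nonneg fun Z _ => by positivity
  have hX1 : G1 X < 1 := by linarith
  have hX2 : G2 X < 1 := by linarith
  have hX3 : G3 X < 1 := by linarith
  obtain ⟨Y, hYX, hYc, hlin, htri⟩ := clean r H hH X
  refine ⟨Y, ?_, hlin, htri, ?_⟩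
  · have h1 : (1 - ε / 2) * (p * n) < X.card := by
      simp only [G1] at hX1
      rw [← Real.exp_add, Real.exp_lt_one_iff] at hX1
      rw [Finset.sum_const, nsmul_eq_mul] at hX1
      nlinarith
    have h2 : (((badP H).filter (fun x => x.1 ∪ x.2 ⊆ X)).card : ℝ) +
        ((badT H).filter (fun x => x.1 ∪ x.2.1 ∪ x.2.2 ⊆ X)).card < ε / 2 * (p * n) := by
      simp only [G2] at hX2
      rw [inv_mul_lt_iff₀ hpos, mul_one] at hX2
      simpa only [Finset.sum_boole] using hX2
    have h3 : (X.card : ℝ) ≤ Y.card + ((((badP H).filter (fun x => x.1 ∪ x.2 ⊆ X)).card : ℝ) +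
        ((badT H).filter (fun x => x.1 ∪ x.2.1 ∪ x.2.2 ⊆ X)).card) := by exact_mod_cast hYc
    linarith
  · intro Z hZY hZind
    have hZH : IsIndep H Z := by
      intro e he heZ
      exact hZind e (Finset.mem_filter.2 ⟨he, heZ.trans hZY⟩) heZ
    have hZc : Z.card ≤ a := by
      refine le_trans ?_ hα
      exact Finset.le_sup (f := Finset.card) (by simp [hZH])
    have hZm : Z ∈ 𝒵 := by simp [𝒵, hZc]
    have h1 : Real.exp (-(ε / 2 * ((1 + ε) * μ))) * Real.exp (∑ v ∈ X, ε / 2 * c Z v) < 1 := by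
      refine lt_of_le_of_lt ?_ hX3
      exact Finset.single_le_sum (f := fun Z => Real.exp (-(ε / 2 * ((1 + ε) * μ))) *
        Real.exp (∑ v ∈ X, ε / 2 * c Z v)) (fun Z _ => by positivity) hZm
    rw [← Real.exp_add, Real.exp_lt_one_iff, ← Finset.mul_sum] at h1
    have h2 : ∑ v ∈ X, c Z v < (1 + ε) * μ := by nlinarith
    have h3 : (∑ v ∈ Y \ Z, min b (((Z.powersetCard r).filter
        (fun e => insert v e ∈ H.filter (fun e' => e' ⊆ Y))).card : ℝ)) / b ≤ ∑ v ∈ X, c Z v := by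
      rw [Finset.sum_div]
      refine le_trans ?_ (Finset.sum_le_sum_of_subset_of_nonneg
        ((Finset.sdiff_subset (s := Y) (t := Z)).trans hYX) (fun v _ _ => hc0 Z v))
      refine Finset.sum_le_sum fun v hv => ?_
      have hv' : v ∉ Z := (Finset.mem_sdiff.1 hv).2
      simp only [c, if_neg hv']
      refine div_le_div_of_nonneg_right (min_le_min_left b ?_) hb.le
      norm_cast
      refine Finset.card_le_card fun e he => ?_
      rw [Finset.mem_filter] at he ⊢
      exact ⟨he.1, (Finset.mem_filter.1 he.2).1⟩
    have h4 := (div_le_iff₀ hb).1 (h3.trans h2.le)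
    refine h4.trans (le_of_eq ?_)
    rw [hμ]
    field_simp

set_option maxHeartbeats 2000000 in
/-- Lemma 5 of the paper. Given a sequence `H n` of `(r+1)`-graphs on `n`
vertices with maximum `r`-degree at most `d n`, independence number at most `α n ≥ r`,
and parameters `p n ∈ [0,1]`, `b n > 0` satisfying the stated asymptotic conditions,
for every `ε > 0` and all sufficiently large `n` there is a vertex set `Y` with
`|Y| ≥ (1−ε)·p n·n`, with `H n[Y]` linear and triangle-free, and with
`h(Z, b n) ≤ (1+ε)·p n·d n·C(α n, r)` for every independent set `Z` of `H n[Y]`,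
where `h` is computed in `H n[Y]`. -/
theorem stmt17 (r : ℕ) (hr : 2 ≤ r)
    (H : ∀ n : ℕ, Finset (Finset (Fin n)))
    (d a : ℕ → ℕ) (p b : ℕ → ℝ)
    (hH : ∀ n, ∀ e ∈ H n, e.card = r + 1)
    (hdeg : ∀ n, maxDegLe r (H n) (d n))
    (hα : ∀ n, indepNum (H n) ≤ a n)
    (hαr : ∀ n, r ≤ a n)
    (hp : ∀ n, p n ∈ Set.Icc (0 : ℝ) 1)
    (hb : ∀ n, 0 < b n)
    (h1 : Filter.Tendsto (fun n : ℕ => p n * n) Filter.atTop Filter.atTop)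
    (h2 : Filter.Tendsto (fun n : ℕ =>
        (p n * (d n : ℝ) ^ 2 * (a n : ℝ) ^ (2 * r)) /
          (((n : ℝ) * (b n) ^ 2 + (d n : ℝ) * b n * (a n : ℝ) ^ r) * (a n : ℝ) * Real.log n))
      Filter.atTop Filter.atTop)
    (h3 : Filter.Tendsto (fun n : ℕ =>
        ((d n : ℝ) ^ 3 * (n : ℝ) ^ (3 * r - 3) * (p n) ^ (3 * r)) / (p n * n))
      Filter.atTop (nhds 0)) :
    ∀ ε : ℝ, 0 < ε → ∃ n₀ : ℕ, ∀ n : ℕ, n₀ ≤ n →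
      ∃ Y : Finset (Fin n),
        (1 - ε) * (p n * n) ≤ (Y.card : ℝ) ∧
        Linear ((H n).filter (fun e => e ⊆ Y)) ∧
        TriangleFree ((H n).filter (fun e => e ⊆ Y)) ∧
        ∀ Z ⊆ Y, IsIndep ((H n).filter (fun e => e ⊆ Y)) Z →
          (∑ v ∈ Y \ Z,
              min (b n) (((Z.powersetCard r).filter
                (fun e => insert v e ∈ (H n).filter (fun e' => e' ⊆ Y))).card : ℝ))
            ≤ (1 + ε) * p n * (d n : ℝ) * (Nat.choose (a n) r : ℝ) := by
  intro ε₀ hε₀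
  obtain ⟨ε, hε, hε1, hεε⟩ : ∃ ε : ℝ, 0 < ε ∧ ε ≤ 1 ∧ ε ≤ ε₀ :=
    ⟨min ε₀ 1, by positivity, min_le_right _ _, min_le_left _ _⟩
  have e1 := h1.eventually_ge_atTop 1
  have e2 : ∀ᶠ n : ℕ in Filter.atTop, Real.exp (-((ε / 2) ^ 2 / 4 * (p n * n))) < 1 / 4 := by
    have : Filter.Tendsto (fun n : ℕ => Real.exp (-((ε / 2) ^ 2 / 4 * (p n * n))))
        Filter.atTop (nhds 0) :=
      Real.tendsto_exp_neg_atTop_nhds_zero.comp (h1.const_mul_atTop (by positivity))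
    exact this.eventually_lt_const (by norm_num)
  set C : ℝ := 2 ^ (r + 1) + 2 ^ (3 * (r + 1)) with hC
  have hCpos : 0 < C := by positivity
  have e3 := h3.eventually_lt_const (show (0 : ℝ) < ε / 16 / C by positivity)
  have e4 := h1.eventually_ge_atTop (16 * C / ε)
  have e5 := h2.eventually_ge_atTop (12 / ε ^ 2 * ((r : ℝ) ^ r * r.factorial))
  have e6 := Filter.eventually_ge_atTop 3
  obtain ⟨n₀, hn₀⟩ := Filter.eventually_atTop.1
    (e1.and (e2.and (e3.and (e4.and (e5.and e6)))))
  refine ⟨n₀, fun n hn => ?_⟩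
  obtain ⟨f1, f2, f3, f4, f5, f6⟩ := hn₀ n hn
  obtain ⟨hp0, hp1⟩ := hp n
  have hpn : 0 < p n * n := by linarith
  obtain ⟨Y, hY1, hY2, hY3, hY4⟩ := core r (d n) (a n) hr (H n) (hH n) (hdeg n) (hα n)
    (p n) (b n) ε hp0 hp1 (hb n) hε hε1 f1 f2 (by
      set Q : ℝ := d n * p n * (p n * n) ^ (r - 1) with hQ
      have hQ0 : 0 ≤ Q := by positivity
      have hQ3 : (d n : ℝ) ^ 3 * (n : ℝ) ^ (3 * r - 3) * (p n) ^ (3 * r) = Q ^ 3 := by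
        obtain ⟨k, rfl⟩ : ∃ k, r = k + 1 := ⟨r - 1, by omega⟩
        rw [hQ, show 3 * (k + 1) - 3 = 3 * k by omega, show k + 1 - 1 = k by omega]
        ring
      rw [hQ3, div_lt_iff₀ hpn] at f3
      have hQ2 : Q ^ 2 ≤ 1 + Q ^ 3 := by
        rcases le_total Q 1 with h | h
        · have : Q ^ 2 ≤ 1 := pow_le_one₀ hQ0 h
          have : 0 ≤ Q ^ 3 := by positivity
          linarith
        · have : Q ^ 2 ≤ Q ^ 3 := pow_le_pow_right₀ h (by norm_num)
          linarith
      have g1 : C * Q ^ 3 ≤ ε / 16 * (p n * n) := by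
        have := mul_le_mul_of_nonneg_left f3.le hCpos.le
        refine this.trans (le_of_eq ?_)
        field_simp
      have g2 : C ≤ ε / 16 * (p n * n) := by
        rw [div_le_iff₀ hε] at f4
        linarith
      have g3 : (2 : ℝ) ^ (r + 1) * Q ^ 2 + 2 ^ (3 * (r + 1)) * Q ^ 3 ≤ C * (1 + Q ^ 3) := by
        rw [hC]
        have t1 : (2 : ℝ) ^ (r + 1) * Q ^ 2 ≤ 2 ^ (r + 1) * (1 + Q ^ 3) := by gcongr
        have t2 : (0 : ℝ) < 2 ^ (3 * (r + 1)) := by positivity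
        linarith
      linarith) (by
      have ha : 2 ≤ a n := hr.trans (hαr n)
      have haR : (2 : ℝ) ≤ a n := by exact_mod_cast ha
      have hn3 : (3 : ℝ) ≤ n := by exact_mod_cast f6
      set L := Real.log n with hL
      have hL0 : 0 < L := Real.log_pos (by linarith)
      have hrpos : 0 < r := by omega
      have hK : 0 < 12 / ε ^ 2 * ((r : ℝ) ^ r * r.factorial) := by positivity
      have hbn := hb n
      have hd : 0 < (d n : ℝ) := by
        rcases Nat.eq_zero_or_pos (d n) with h | h
        · rw [h] at f5
          simp only [Nat.cast_zero, ne_eq, OfNat.ofNat_ne_zero, not_false_eq_true, zero_pow,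
            mul_zero, zero_mul, zero_div] at f5
          linarith
        · exact_mod_cast h
      have hch : (a n : ℝ) ^ r ≤ ((r : ℝ) ^ r * r.factorial) * Nat.choose (a n) r := by
        have hf : (0 : ℝ) < r.factorial := by exact_mod_cast Nat.factorial_pos r
        have hq := Nat.pow_le_choose (α := ℝ) r (a n)
        rw [div_le_iff₀ hf] at hq
        have hle : a n ≤ r * (a n + 1 - r) := by
          obtain ⟨k, hk⟩ : ∃ k, a n = r + k := ⟨a n - r, by have := hαr n; omega⟩
          rw [hk, show r + k + 1 - r = k + 1 by omega]
          nlinarith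
        have hle' : (a n : ℝ) ≤ r * ((a n + 1 - r : ℕ) : ℝ) := by exact_mod_cast hle
        calc (a n : ℝ) ^ r ≤ (r * ((a n + 1 - r : ℕ) : ℝ)) ^ r := by gcongr
          _ = (r : ℝ) ^ r * ((a n + 1 - r : ℕ) : ℝ) ^ r := mul_pow _ _ _
          _ ≤ (r : ℝ) ^ r * (Nat.choose (a n) r * r.factorial) := by gcongr
          _ = _ := by ring
      have hD : 0 < ((n : ℝ) * (b n) ^ 2 + (d n : ℝ) * b n * (a n : ℝ) ^ r) * (a n : ℝ) * L := by
        positivity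
      rw [le_div_iff₀ hD] at f5
      have g1 : 12 / ε ^ 2 * ((r : ℝ) ^ r * r.factorial) * (b n * a n * L) ≤ p n * d n * (a n : ℝ) ^ r := by
        have hx : 0 < (d n : ℝ) * (a n : ℝ) ^ r := by positivity
        refine le_of_mul_le_mul_left ?_ hx
        have hy : 0 ≤ 12 / ε ^ 2 * ((r : ℝ) ^ r * r.factorial) * ((n : ℝ) * (b n) ^ 2 * a n * L) := by positivity
        have hz : (a n : ℝ) ^ (2 * r) = (a n : ℝ) ^ r * (a n : ℝ) ^ r := by
          rw [two_mul, pow_add]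
        rw [hz] at f5
        linarith
      have g2 : 12 / ε ^ 2 * (b n * a n * L) ≤ p n * d n * Nat.choose (a n) r := by
        have hx : 0 < ((r : ℝ) ^ r * r.factorial) := by positivity
        refine le_of_mul_le_mul_left ?_ hx
        have := mul_le_mul_of_nonneg_left hch (show 0 ≤ p n * d n by positivity)
        linarith
      have g3 : 3 * (a n * L) ≤ ε ^ 2 / 4 * (p n * d n * Nat.choose (a n) r / b n) := by
        have : 12 / ε ^ 2 * (a n * L) ≤ p n * d n * Nat.choose (a n) r / b n := by
          rw [le_div_iff₀ hbn]; linarith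
        have h := mul_le_mul_of_nonneg_left this (show 0 ≤ ε ^ 2 / 4 by positivity)
        refine le_trans (le_of_eq ?_) h
        field_simp
        norm_num
      have g4 : ((n : ℝ) + 1) ^ (a n) ≤ Real.exp (2 * (a n * L)) := by
        have : (n : ℝ) + 1 ≤ Real.exp (2 * L) := by
          rw [two_mul, Real.exp_add, hL, Real.exp_log (by linarith)]
          nlinarith
        calc _ ≤ (Real.exp (2 * L)) ^ (a n) := by gcongr
          _ = _ := by rw [← Real.exp_nat_mul]; congr 1; ring
      calc _ ≤ Real.exp (2 * (a n * L)) * Real.exp (-(3 * (a n * L))) := by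
            gcongr
        _ = Real.exp (-(a n * L)) := by rw [← Real.exp_add]; congr 1; ring
        _ ≤ Real.exp (-(2 * L)) := by
            apply Real.exp_le_exp.2
            nlinarith
        _ = ((n : ℝ) * n)⁻¹ := by
            rw [Real.exp_neg, two_mul, Real.exp_add, hL, Real.exp_log (by linarith)]
        _ < 1 / 4 := by
            rw [one_div]
            apply inv_strictAnti₀ (by norm_num)
            nlinarith)
  refine ⟨Y, ?_, hY2, hY3, fun Z hZ hZi => (hY4 Z hZ hZi).trans ?_⟩
  · refine le_trans ?_ hY1
    gcongr
  · gcongr
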